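/- Main theorem: Let φ be a real-valued function on real n×n matrices, differentiable (Fréchet) at a symmetric matrix A, and let G satisfy Dφ(A)[H] = ⟨G,H⟩_F for every matrix H. Define φ_s : (P → ℝ) → ℝ by φ_s(a) := φ(mat(D·a)). Then φ_s is differentiable at hvec(A), and if g : P → ℝ represents its derivative, i.e., Dφ_s(hvec(A))[v] = Σ_{p∈P} g(p)·v(p) for all v : P → ℝ, then the lifted matrix G_s := mat(D·((DᵀD)⁻¹·g)) equals sym(G) = (G + Gᵀ)/2. In particular ⟨G_s,H⟩_F = ⟨sym(G),H⟩_F for every symmetric H, so the correct 'symmetric gradient' is (G + Gᵀ)/2, not G + Gᵀ − G∘I. -/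

import Mathlib

open Matrix

/-- Index set `P = {(i,j) : i ≤ j}` of size `n(n+1)/2`. -/
abbrev SymIdx (n : ℕ) := {p : Fin n × Fin n // p.1 ≤ p.2}

/-- The duplication matrix `D`, with `D (k,l) (i,j) = 1` if `(k,l) = (i,j)` or
`(k,l) = (j,i)`, and `0` otherwise. -/
def Dup (n : ℕ) : Matrix (Fin n × Fin n) (SymIdx n) ℝ :=
  fun kl q => if kl = q.1 ∨ kl = (q.1.2, q.1.1) then 1 else 0

/-- `vec(A) (k,l) = A k l`. -/
def vec {n : ℕ} (A : Matrix (Fin n) (Fin n) ℝ) : Fin n × Fin n → ℝ :=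
  fun p => A p.1 p.2

/-- `hvec(A) (i,j) = A i j` for `i ≤ j`. -/
def hvec {n : ℕ} (A : Matrix (Fin n) (Fin n) ℝ) : SymIdx n → ℝ :=
  fun q => A q.1.1 q.1.2

/-- Reshape a vector indexed by `Fin n × Fin n` into an `n × n` matrix. -/
def mat {n : ℕ} (v : Fin n × Fin n → ℝ) : Matrix (Fin n) (Fin n) ℝ :=
  fun k l => v (k, l)

attribute [local instance] Matrix.frobeniusNormedAddCommGroup Matrix.frobeniusNormedSpace

theorem Dup_mulVec_le {n : ℕ} (a : SymIdx n → ℝ) (q : SymIdx n) :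
    (Dup n *ᵥ a) q.1 = a q := by
  rw [Matrix.mulVec, dotProduct, Finset.sum_eq_single q]
  · simp [Dup]
  · rintro ⟨⟨i, j⟩, hij⟩ - hne
    obtain ⟨⟨k, l⟩, hkl⟩ := q
    have : ¬ ((k, l) = (i, j) ∨ (k, l) = (j, i)) := by
      rintro (h | h)
      · exact hne (Subtype.ext h.symm)
      · simp only [Prod.mk.injEq] at h
        obtain ⟨rfl, rfl⟩ := h
        have h2 : k = l := le_antisymm hkl hij
        subst h2
        exact hne rfl
    simp only [Dup]
    rw [if_neg this, zero_mul]
  · simp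

theorem Dup_mulVec_swap {n : ℕ} (a : SymIdx n → ℝ) (k l : Fin n) :
    (Dup n *ᵥ a) (k, l) = (Dup n *ᵥ a) (l, k) := by
  simp only [Matrix.mulVec, dotProduct]
  refine Finset.sum_congr rfl fun q _ => ?_
  obtain ⟨⟨i, j⟩, hij⟩ := q
  have : ((k, l) = (i, j) ∨ (k, l) = (j, i)) ↔ ((l, k) = (i, j) ∨ (l, k) = (j, i)) := by
    simp only [Prod.mk.injEq]; tauto
  simp only [Dup, this]

theorem mat_Dup_hvec {n : ℕ} (S : Matrix (Fin n) (Fin n) ℝ) (hS : Sᵀ = S) :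
    mat (Dup n *ᵥ hvec S) = S := by
  ext k l
  rcases le_total k l with h | h
  · exact Dup_mulVec_le (hvec S) ⟨(k, l), h⟩
  · have h1 := Dup_mulVec_le (hvec S) ⟨(l, k), h⟩
    have h2 := congrFun (congrFun hS k) l
    simp only [mat]
    rw [Dup_mulVec_swap]
    exact h1.trans h2

theorem Dup_gram_isUnit (n : ℕ) : IsUnit ((Dup n)ᵀ * Dup n) := by
  rw [← Matrix.mulVec_injective_iff_isUnit]
  have key : ∀ w, ((Dup n)ᵀ * Dup n) *ᵥ w = 0 → w = 0 := by
    intro w hw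
    have h0 : Dup n *ᵥ w = 0 := by
      have := congrArg (fun u => w ⬝ᵥ u) hw
      simp only [dotProduct_zero] at this
      rw [← Matrix.mulVec_mulVec, Matrix.dotProduct_mulVec, Matrix.vecMul_transpose] at this
      exact dotProduct_self_eq_zero.1 this
    ext q
    rw [← Dup_mulVec_le w q, h0]; rfl
  intro x y hxy
  have := key (x - y) (by rw [Matrix.mulVec_sub]; exact sub_eq_zero.2 hxy)
  exact sub_eq_zero.1 this

theorem trace_mat {n : ℕ} (S : Matrix (Fin n) (Fin n) ℝ) (v : Fin n × Fin n → ℝ) :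
    (Sᵀ * mat v).trace = _root_.vec S ⬝ᵥ v := by
  simp only [Matrix.trace, Matrix.diag, Matrix.mul_apply, dotProduct, Fintype.sum_prod_type,
    Matrix.transpose_apply, mat, _root_.vec]
  exact Finset.sum_comm

theorem mat_symm {n : ℕ} (a : SymIdx n → ℝ) : (mat (Dup n *ᵥ a))ᵀ = mat (Dup n *ᵥ a) := by
  ext k l
  exact Dup_mulVec_swap a l k

theorem trace_sym {n : ℕ} (G M : Matrix (Fin n) (Fin n) ℝ) (hM : Mᵀ = M) :
    (((1 / 2 : ℝ) • (G + Gᵀ))ᵀ * M).trace = (Gᵀ * M).trace := by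
  have : (G * M).trace = (Gᵀ * M).trace := by
    rw [← Matrix.trace_transpose, Matrix.transpose_mul, hM, Matrix.trace_mul_comm]
  simp only [Matrix.transpose_smul, Matrix.transpose_add, Matrix.transpose_transpose,
    Matrix.smul_mul, Matrix.add_mul, Matrix.trace_smul, Matrix.trace_add, this, smul_eq_mul]
  ring

/-- The linear map `a ↦ mat (D a)`. -/
noncomputable def liftLin (n : ℕ) : (SymIdx n → ℝ) →L[ℝ] Matrix (Fin n) (Fin n) ℝ :=
  LinearMap.toContinuousLinearMap
    { toFun := fun a => mat (Dup n *ᵥ a)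
      map_add' := fun a b => by rw [Matrix.mulVec_add]; rfl
      map_smul' := fun c a => by rw [Matrix.mulVec_smul]; rfl }

theorem liftLin_apply (n : ℕ) (a : SymIdx n → ℝ) : liftLin n a = mat (Dup n *ᵥ a) := rfl

/-- Main theorem: if `φ` is differentiable at the symmetric matrix `A` with
gradient `G` (`Dφ(A)[H] = ⟨G,H⟩_F` for all `H`), then `φ_s(a) := φ(mat(D·a))`
is differentiable at `hvec(A)`, and if `g` represents its derivative
(`Dφ_s(hvec A)[v] = ⟨g,v⟩` for all `v`), then the lifted matrix
`G_s := mat(D·((DᵀD)⁻¹·g))` equals `sym(G) = (G + Gᵀ)/2`; in particular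
`⟨G_s,H⟩_F = ⟨sym(G),H⟩_F` for every symmetric `H`. -/
theorem correct_symmetric_gradient (n : ℕ)
    (φ : Matrix (Fin n) (Fin n) ℝ → ℝ) (A G : Matrix (Fin n) (Fin n) ℝ)
    (hA : Aᵀ = A) (hφ : DifferentiableAt ℝ φ A)
    (hG : ∀ H : Matrix (Fin n) (Fin n) ℝ, fderiv ℝ φ A H = (Gᵀ * H).trace) :
    DifferentiableAt ℝ (fun a : SymIdx n → ℝ => φ (mat (Dup n *ᵥ a))) (hvec A) ∧
    ∀ g : SymIdx n → ℝ,
      (∀ v : SymIdx n → ℝ,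
        fderiv ℝ (fun a : SymIdx n → ℝ => φ (mat (Dup n *ᵥ a))) (hvec A) v = g ⬝ᵥ v) →
      mat (Dup n *ᵥ (((Dup n)ᵀ * Dup n)⁻¹ *ᵥ g)) = (1 / 2 : ℝ) • (G + Gᵀ) ∧
      ∀ H : Matrix (Fin n) (Fin n) ℝ, Hᵀ = H →
        ((mat (Dup n *ᵥ (((Dup n)ᵀ * Dup n)⁻¹ *ᵥ g)))ᵀ * H).trace =
          ((((1 / 2 : ℝ) • (G + Gᵀ))ᵀ) * H).trace := by
  have hA' : liftLin n (hvec A) = A := mat_Dup_hvec A hA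
  have hφ' : HasFDerivAt φ (fderiv ℝ φ A) (liftLin n (hvec A)) := by
    rw [hA']; exact hφ.hasFDerivAt
  have hd : HasFDerivAt (fun a : SymIdx n → ℝ => φ (mat (Dup n *ᵥ a)))
      ((fderiv ℝ φ A).comp (liftLin n)) (hvec A) :=
    hφ'.comp (hvec A) (liftLin n).hasFDerivAt
  refine ⟨hd.differentiableAt, fun g hg => ?_⟩
  have main : mat (Dup n *ᵥ (((Dup n)ᵀ * Dup n)⁻¹ *ᵥ g)) = (1 / 2 : ℝ) • (G + Gᵀ) := by
    set S := (1 / 2 : ℝ) • (G + Gᵀ) with hSdef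
    have hS : Sᵀ = S := by
      simp [hSdef, add_comm]
    have hv : _root_.vec S = Dup n *ᵥ hvec S := by
      have := congrArg _root_.vec (mat_Dup_hvec S hS)
      exact this.symm
    have hgS : g = ((Dup n)ᵀ * Dup n) *ᵥ hvec S := by
      refine dotProduct_eq _ _ fun v => ?_
      rw [← hg v, hd.fderiv]
      change fderiv ℝ φ A (liftLin n v) = _
      rw [hG, liftLin_apply, ← trace_sym G _ (mat_symm v), trace_mat, ← hSdef, hv,
        ← Matrix.mulVec_mulVec, Matrix.dotProduct_mulVec, Matrix.mulVec_transpose]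
    rw [hgS, Matrix.mulVec_mulVec (hvec S) (((Dup n)ᵀ * Dup n)⁻¹), Matrix.nonsing_inv_mul _
      ((Matrix.isUnit_iff_isUnit_det _).1 (Dup_gram_isUnit n)), Matrix.one_mulVec]
    exact mat_Dup_hvec S hS
  exact ⟨main, fun H _ => by rw [main]⟩
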